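/- Let μ > 0 and μ ≤ d < 2μ. Then lim_{m→∞} sup_{p ≥ 0} inf_{P^m ∈ P(μ,d)^m} BUND(p,P^m)/m exists and equals μ − d/2; moreover μ − d/2 ≤ liminf_{m→∞} sup_{D ∈ D_m} inf_{P^m ∈ P(μ,d)^m} REV(D,P^m)/m ≤ limsup_{m→∞} inf_{P^m ∈ P(μ,d)^m} sup_{D ∈ D_m} REV(D,P^m)/m ≤ d/2. -/

import Mathlib

/-!
Two facts drive the proof.

*Bundling guarantees `μ - d/2`.* Truncation at the mean, `min X μ`, has expectation `μ - d/2`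
for every law in the ambiguity set, takes values in `[0, μ]`, and is dominated by `X`.
Chebyshev's inequality for the sum of the truncations (`le_prob_sum`) shows that the bundle
price `m (μ - d/2 - δ)` is accepted with probability tending to one, uniformly over the
ambiguity set.

*Rare large values are the adversary.* Consider the two-point law with high value
`μ + d / (2 t)` of probability `t` and low value `a = lowPt μ d t`, which tends to `μ - d/2` as
`t → 0`. For fixed `m`, all goods take the value `a` with probability `(1 - t) ^ m → 1`. Hence a
bundle price above `m (μ - d/2)` earns nothing in the limit (`sInf_BUND_le`), so no bundle price
guarantees more than `μ - d/2` per good. For a truthful mechanism, let `z` be the allocation at the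
all-low profile. Incentive compatibility against that profile gives
`price v ≤ ∑ i, (z i * a + (1 - z i) * v i)`, with the second summand dropped when `v` is the
all-low profile itself (`price_le_of_low`). Taking expectations and letting `t → 0`, each good
contributes at most `max (μ - d/2) (d/2) = d/2` (`minimaxVal_le`), since `μ ≤ d`.

The remaining inequalities are that bundling is a truthful mechanism and weak duality
(maximin is at most minimax). All suprema and infima involved are over nonempty bounded sets,
because individual rationality bounds the payment by the sum of the values.
-/

open MeasureTheory Filter Set
open scoped ENNReal

noncomputable section

/-- The mean-MAD ambiguity set: Borel probability measures on `[0,∞)` (modeled as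
probability measures on `ℝ` giving zero mass to `(-∞,0)`) with mean `μ` and
mean absolute deviation `d`. -/
def MeanMAD (μ d : ℝ) : Set (ProbabilityMeasure ℝ) :=
  {P | (P : Measure ℝ) (Set.Iio 0) = 0 ∧
       Integrable (fun x => x) (P : Measure ℝ) ∧
       (∫ x, x ∂(P : Measure ℝ)) = μ ∧
       (∫ x, |x - μ| ∂(P : Measure ℝ)) = d}

/-- A probability measure whose support consists of exactly two points. -/
def IsTwoPoint (P : ProbabilityMeasure ℝ) : Prop :=
  ∃ x y : ℝ, x ≠ y ∧ (P : Measure ℝ) ({x, y} : Set ℝ)ᶜ = 0 ∧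
    (P : Measure ℝ) {x} ≠ 0 ∧ (P : Measure ℝ) {y} ≠ 0

/-- The subset of the mean-MAD ambiguity set consisting of two-point distributions. -/
def MeanMAD2 (μ d : ℝ) : Set (ProbabilityMeasure ℝ) :=
  {P ∈ MeanMAD μ d | IsTwoPoint P}

/-- A deterministic mechanism for selling `m` goods: a measurable allocation rule with
values in `{0,1}^m` and a measurable nonnegative payment rule. -/
structure Mech (m : ℕ) where
  alloc : (Fin m → ℝ) → (Fin m → ℝ)
  price : (Fin m → ℝ) → ℝ
  alloc_meas : Measurable alloc
  price_meas : Measurable price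
  alloc01 : ∀ v i, alloc v i = 0 ∨ alloc v i = 1
  price_nonneg : ∀ v, 0 ≤ price v

/-- Truthfulness: incentive compatibility and individual rationality on `[0,∞)^m`. -/
def Truthful {m : ℕ} (D : Mech m) : Prop :=
  (∀ v w : Fin m → ℝ, (∀ i, 0 ≤ v i) → (∀ i, 0 ≤ w i) →
    (∑ i, D.alloc w i * v i) - D.price w ≤ (∑ i, D.alloc v i * v i) - D.price v) ∧
  (∀ v : Fin m → ℝ, (∀ i, 0 ≤ v i) → 0 ≤ (∑ i, D.alloc v i * v i) - D.price v)

/-- Expected revenue of a mechanism under a joint distribution of valuations. -/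
def REV {m : ℕ} (D : Mech m) (Pm : Measure (Fin m → ℝ)) : ℝ :=
  ∫ v, D.price v ∂Pm

/-- Revenue of the bundling mechanism with price `p`. -/
def BUND {m : ℕ} (p : ℝ) (Pm : Measure (Fin m → ℝ)) : ℝ :=
  p * (Pm {v | p ≤ ∑ i, v i}).toReal

/-- Optimal deterministic revenue for a known joint distribution. -/
def OPT (m : ℕ) (Pm : Measure (Fin m → ℝ)) : ℝ :=
  sSup {r | ∃ D : Mech m, Truthful D ∧ r = REV D Pm}

/-- The joint (product) measure of a family of independent marginals. -/
def jointMeasure {m : ℕ} (P : Fin m → ProbabilityMeasure ℝ) : Measure (Fin m → ℝ) :=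
  Measure.pi (fun i => (P i : Measure ℝ))

/-- Maximin value over deterministic truthful mechanisms. -/
def maximinVal (A : Set (ProbabilityMeasure ℝ)) (m : ℕ) : ℝ :=
  sSup {r | ∃ D : Mech m, Truthful D ∧
    r = sInf {s | ∃ P : Fin m → ProbabilityMeasure ℝ, (∀ i, P i ∈ A) ∧
      s = REV D (jointMeasure P) / m}}

/-- Minimax value over deterministic truthful mechanisms. -/
def minimaxVal (A : Set (ProbabilityMeasure ℝ)) (m : ℕ) : ℝ :=
  sInf {r | ∃ P : Fin m → ProbabilityMeasure ℝ, (∀ i, P i ∈ A) ∧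
    r = sSup {s | ∃ D : Mech m, Truthful D ∧ s = REV D (jointMeasure P) / m}}

/-- Maximin value of the bundling mechanism over nonnegative prices. -/
def bundMaximinVal (A : Set (ProbabilityMeasure ℝ)) (m : ℕ) : ℝ :=
  sSup {r | ∃ p : ℝ, 0 ≤ p ∧
    r = sInf {s | ∃ P : Fin m → ProbabilityMeasure ℝ, (∀ i, P i ∈ A) ∧
      s = BUND p (jointMeasure P) / m}}

/-! ### Product measures over the ambiguity set -/

instance isProbabilityMeasure_jointMeasure {m : ℕ} (P : Fin m → ProbabilityMeasure ℝ) :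
    IsProbabilityMeasure (jointMeasure P) := by
  unfold jointMeasure; infer_instance

lemma ae_nonneg {μ d : ℝ} {P : ProbabilityMeasure ℝ} (hP : P ∈ MeanMAD μ d) :
    ∀ᵐ x ∂(P : Measure ℝ), 0 ≤ x := by
  rw [ae_iff]
  convert hP.1 using 2
  ext x; simp

lemma ae_nonneg_joint {μ d : ℝ} {m : ℕ} {P : Fin m → ProbabilityMeasure ℝ}
    (hP : ∀ i, P i ∈ MeanMAD μ d) : ∀ᵐ v ∂(jointMeasure P), ∀ i, 0 ≤ v i := by
  rw [ae_all_iff]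
  intro i
  exact (measurePreserving_eval (fun i => (P i : Measure ℝ)) i).quasiMeasurePreserving.ae
    (ae_nonneg (hP i))

lemma integrable_coord {μ d : ℝ} {m : ℕ} {P : Fin m → ProbabilityMeasure ℝ}
    (hP : ∀ i, P i ∈ MeanMAD μ d) (i : Fin m) :
    Integrable (fun v : Fin m → ℝ => v i) (jointMeasure P) :=
  (measurePreserving_eval (fun i => (P i : Measure ℝ)) i).integrable_comp_of_integrable
    (hP i).2.1

lemma integral_coord {μ d : ℝ} {m : ℕ} {P : Fin m → ProbabilityMeasure ℝ}
    (hP : ∀ i, P i ∈ MeanMAD μ d) (i : Fin m) :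
    ∫ v, v i ∂(jointMeasure P) = μ := by
  rw [← (hP i).2.2.1, ← (measurePreserving_eval (fun i => (P i : Measure ℝ)) i).map_eq,
    integral_map (measurable_pi_apply i).aemeasurable (by fun_prop)]
  rfl

/-! ### Mechanisms -/

lemma Mech.alloc_nonneg {m : ℕ} (D : Mech m) (v : Fin m → ℝ) (i : Fin m) : 0 ≤ D.alloc v i := by
  rcases D.alloc01 v i with h | h <;> simp [h]

lemma Mech.alloc_le_one {m : ℕ} (D : Mech m) (v : Fin m → ℝ) (i : Fin m) : D.alloc v i ≤ 1 := by
  rcases D.alloc01 v i with h | h <;> simp [h]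

lemma price_le_sum {m : ℕ} {D : Mech m} (hD : Truthful D) {v : Fin m → ℝ} (hv : ∀ i, 0 ≤ v i) :
    D.price v ≤ ∑ i, v i := by
  have h1 := hD.2 v hv
  have h2 : ∑ i, D.alloc v i * v i ≤ ∑ i, v i := Finset.sum_le_sum fun i _ =>
    mul_le_of_le_one_left (hv i) (D.alloc_le_one v i)
  linarith

lemma integrable_price {μ d : ℝ} {m : ℕ} {P : Fin m → ProbabilityMeasure ℝ}
    (hP : ∀ i, P i ∈ MeanMAD μ d) {D : Mech m} (hD : Truthful D) :
    Integrable D.price (jointMeasure P) := by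
  refine (integrable_finsetSum Finset.univ fun i _ => integrable_coord hP i).mono'
    D.price_meas.aestronglyMeasurable ?_
  filter_upwards [ae_nonneg_joint hP] with v hv
  rw [Real.norm_of_nonneg (D.price_nonneg v)]
  exact price_le_sum hD hv

lemma REV_nonneg {m : ℕ} (D : Mech m) (Q : Measure (Fin m → ℝ)) : 0 ≤ REV D Q :=
  integral_nonneg D.price_nonneg

lemma REV_div_le {μ d : ℝ} (hμ : 0 < μ) {m : ℕ} {P : Fin m → ProbabilityMeasure ℝ}
    (hP : ∀ i, P i ∈ MeanMAD μ d) {D : Mech m} (hD : Truthful D) :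
    REV D (jointMeasure P) / m ≤ μ := by
  refine div_le_of_le_mul₀ (by positivity) hμ.le ?_
  calc REV D (jointMeasure P) ≤ ∫ v, ∑ i, v i ∂(jointMeasure P) := by
        refine integral_mono_ae (integrable_price hP hD)
          (integrable_finsetSum Finset.univ fun i _ => integrable_coord hP i) ?_
        filter_upwards [ae_nonneg_joint hP] with v hv using price_le_sum hD hv
    _ = μ * m := by
        rw [integral_finsetSum _ fun i _ => integrable_coord hP i]
        simp [integral_coord hP, mul_comm]

open Classical in
/-- The bundling mechanism: the grand bundle is sold at the take-it-or-leave-it price `p`. -/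
def bundMech (m : ℕ) (p : ℝ) (hp : 0 ≤ p) : Mech m where
  alloc v := if p ≤ ∑ i, v i then 1 else 0
  price v := if p ≤ ∑ i, v i then p else 0
  alloc_meas := Measurable.ite (measurableSet_le measurable_const (by fun_prop))
    measurable_const measurable_const
  price_meas := Measurable.ite (measurableSet_le measurable_const (by fun_prop))
    measurable_const measurable_const
  alloc01 v i := by split_ifs <;> simp
  price_nonneg v := by split_ifs <;> simp [hp]

lemma bundMech_truthful (m : ℕ) (p : ℝ) (hp : 0 ≤ p) : Truthful (bundMech m p hp) := by
  constructor
  · intro v w _ _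
    simp only [bundMech]
    split_ifs <;> simp <;> linarith
  · intro v _
    simp only [bundMech]
    split_ifs <;> simp; linarith

lemma REV_bundMech {m : ℕ} (p : ℝ) (hp : 0 ≤ p) (Q : Measure (Fin m → ℝ)) :
    REV (bundMech m p hp) Q = BUND p Q := by
  have hs : MeasurableSet {v : Fin m → ℝ | p ≤ ∑ i, v i} :=
    measurableSet_le measurable_const (by fun_prop)
  have : (bundMech m p hp).price = {v : Fin m → ℝ | p ≤ ∑ i, v i}.indicator fun _ => p := by
    ext v; simp [bundMech, indicator]
  unfold REV BUND
  rw [this, integral_indicator_const _ hs]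
  simp [Measure.real, mul_comm]

/-! ### Two-point distributions with a rare large value -/

/-- The low value of the two-point distribution in `MeanMAD μ d` whose high value has
probability `t`. -/
def lowPt (μ d t : ℝ) : ℝ := μ - d / (2 * (1 - t))

/-- The high value `μ + d / (2 t)` is forced by the two moment constraints. -/
lemma exists_twoPoint {μ d t : ℝ} (hμ : 0 < μ) (hd0 : 0 < d) (ht0 : 0 < t) (ht1 : t < 1)
    (ha : 0 ≤ lowPt μ d t) :
    ∃ P ∈ MeanMAD μ d, (P : Measure ℝ) {lowPt μ d t} = ENNReal.ofReal (1 - t) := by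
  have h1t : 0 < 1 - t := by linarith
  set a := lowPt μ d t with ha'
  set H := μ + d / (2 * t) with hH
  have hH0 : μ < H := by
    have : 0 < d / (2 * t) := by positivity
    linarith
  have haμ : a < μ := by
    have : 0 < d / (2 * (1 - t)) := by positivity
    simp only [ha', lowPt]; linarith
  let Q : Measure ℝ := ENNReal.ofReal (1 - t) • Measure.dirac a + ENNReal.ofReal t • Measure.dirac H
  have hQ : IsProbabilityMeasure Q := by
    constructor
    simp [Q, ← ENNReal.ofReal_add h1t.le ht0.le]
  have hint : ∀ f : ℝ → ℝ, ∫ x, f x ∂Q = (1 - t) * f a + t * f H := by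
    intro f
    have i1 : Integrable f (ENNReal.ofReal (1 - t) • Measure.dirac a) :=
      (integrable_dirac (by simp)).smul_measure (by simp)
    have i2 : Integrable f (ENNReal.ofReal t • Measure.dirac H) :=
      (integrable_dirac (by simp)).smul_measure (by simp)
    rw [integral_add_measure i1 i2, integral_smul_measure, integral_smul_measure]
    simp [h1t.le, ht0.le]
  refine ⟨⟨Q, hQ⟩, ⟨?_, ?_, ?_, ?_⟩, ?_⟩
  · simp [Q, ha, (hμ.trans hH0).le]
  · exact ((integrable_dirac (by simp)).smul_measure (by simp)).add_measure
      ((integrable_dirac (by simp)).smul_measure (by simp))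
  · simp only [ProbabilityMeasure.coe_mk]
    rw [hint]
    simp only [ha', lowPt, hH]
    field_simp
    ring
  · simp only [ProbabilityMeasure.coe_mk]
    rw [hint, abs_of_neg (by linarith), abs_of_pos (by linarith)]
    simp only [ha', lowPt, hH]
    field_simp
    ring
  · simp [Q, (haμ.trans hH0).ne']

lemma tendsto_lowPt (μ d : ℝ) : Tendsto (lowPt μ d) (nhdsWithin 0 (Ioi 0)) (nhds (μ - d / 2)) := by
  have : ContinuousAt (lowPt μ d) 0 := by
    unfold lowPt
    refine continuousAt_const.sub (continuousAt_const.div (by fun_prop) (by norm_num))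
  have h := this.tendsto
  simp only [lowPt, sub_zero, mul_one] at h
  exact h.mono_left nhdsWithin_le_nhds

/-- For small `t` the two-point distribution exists, and under its `m`-fold product all goods
take the low value with probability `(1 - t) ^ m`. -/
lemma eventually_twoPoint {μ d : ℝ} (hμ : 0 < μ) (hd0 : 0 < d) (hd : d < 2 * μ) (m : ℕ) :
    ∀ᶠ t in nhdsWithin (0 : ℝ) (Ioi 0), 0 ≤ lowPt μ d t ∧ lowPt μ d t < μ - d / 2 ∧
      ∃ P : Fin m → ProbabilityMeasure ℝ, (∀ i, P i ∈ MeanMAD μ d) ∧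
        (jointMeasure P).real {fun _ => lowPt μ d t} = (1 - t) ^ m := by
  have h0 : ∀ᶠ t in nhdsWithin (0 : ℝ) (Ioi 0), 0 < lowPt μ d t :=
    (tendsto_lowPt μ d).eventually (lt_mem_nhds (by linarith))
  have h1 : ∀ᶠ t in nhdsWithin (0 : ℝ) (Ioi 0), t < 1 :=
    nhdsWithin_le_nhds (gt_mem_nhds one_pos)
  filter_upwards [h0, h1, self_mem_nhdsWithin] with t ha ht1 ht0
  simp only [mem_Ioi] at ht0
  obtain ⟨P, hP, hPa⟩ := exists_twoPoint hμ hd0 ht0 ht1 ha.le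
  refine ⟨ha.le, ?_, fun _ => P, fun _ => hP, ?_⟩
  · have : d / 2 < d / (2 * (1 - t)) :=
      div_lt_div_of_pos_left hd0 (by linarith) (by linarith)
    unfold lowPt; linarith
  · simp [jointMeasure, Measure.real, Measure.pi_singleton, hPa, (sub_pos.2 ht1).le]

lemma exists_mem_MeanMAD {μ d : ℝ} (hμ : 0 < μ) (hd0 : 0 < d) (hd : d < 2 * μ) (m : ℕ) :
    ∃ P : Fin m → ProbabilityMeasure ℝ, ∀ i, P i ∈ MeanMAD μ d := by
  obtain ⟨t, _, _, P, hP, _⟩ := (eventually_twoPoint hμ hd0 hd m).exists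
  exact ⟨P, hP⟩

/-! ### Bundling -/

lemma BUND_nonneg {m : ℕ} {p : ℝ} (hp : 0 ≤ p) (Q : Measure (Fin m → ℝ)) : 0 ≤ BUND p Q :=
  mul_nonneg hp ENNReal.toReal_nonneg

/-- A price of at most `m (μ - d/2)` cannot earn more than itself; above that threshold,
the bundle is sold only if some good takes its rare large value, whose probability can be made
arbitrarily small. -/
lemma sInf_BUND_le {μ d : ℝ} (hμ : 0 < μ) (hd0 : 0 < d) (hd : d < 2 * μ) {m : ℕ} (hm : 0 < m)
    {p : ℝ} (hp : 0 ≤ p) :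
    sInf {s | ∃ P : Fin m → ProbabilityMeasure ℝ, (∀ i, P i ∈ MeanMAD μ d) ∧
      s = BUND p (jointMeasure P) / m} ≤ μ - d / 2 := by
  have hbdd : BddBelow {s | ∃ P : Fin m → ProbabilityMeasure ℝ, (∀ i, P i ∈ MeanMAD μ d) ∧
      s = BUND p (jointMeasure P) / m} := by
    refine ⟨0, ?_⟩
    rintro s ⟨P, _, rfl⟩
    exact div_nonneg (BUND_nonneg hp _) (by positivity)
  have hm' : (0 : ℝ) < m := by exact_mod_cast hm
  rcases le_or_gt p (m * (μ - d / 2)) with h | h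
  · obtain ⟨P, hP⟩ := exists_mem_MeanMAD hμ hd0 hd m
    refine (csInf_le hbdd ⟨P, hP, rfl⟩).trans ?_
    rw [div_le_iff₀ hm', mul_comm _ (m : ℝ)]
    refine le_trans ?_ h
    exact mul_le_of_le_one_right hp (measureReal_le_one (μ := jointMeasure P))
  · have key : ∀ᶠ t in nhdsWithin (0 : ℝ) (Ioi 0),
        sInf {s | ∃ P : Fin m → ProbabilityMeasure ℝ, (∀ i, P i ∈ MeanMAD μ d) ∧
          s = BUND p (jointMeasure P) / m} ≤ p * (1 - (1 - t) ^ m) / m := by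
      filter_upwards [eventually_twoPoint hμ hd0 hd m] with t ⟨_, hlt, P, hP, hPl⟩
      refine (csInf_le hbdd ⟨P, hP, rfl⟩).trans ?_
      unfold BUND
      gcongr
      rw [← hPl, ← probReal_compl_eq_one_sub (measurableSet_singleton _)]
      refine measureReal_mono ?_
      intro v hv hv'
      simp only [mem_ofPred_eq, mem_singleton_iff] at hv hv'
      subst hv'
      simp only [Finset.sum_const, Finset.card_univ, Fintype.card_fin, nsmul_eq_mul] at hv
      nlinarith
    have hlim : Tendsto (fun t : ℝ => p * (1 - (1 - t) ^ m) / m) (nhdsWithin 0 (Ioi 0))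
        (nhds 0) := by
      have : Continuous (fun t : ℝ => p * (1 - (1 - t) ^ m) / m) := by fun_prop
      have h := this.tendsto 0
      simp only [sub_zero, one_pow, sub_self, mul_zero, zero_div] at h
      exact h.mono_left nhdsWithin_le_nhds
    exact (ge_of_tendsto hlim key).trans (by linarith)

/-- Truncating at the mean keeps the expectation `μ - d/2` and makes the variable bounded. -/
lemma integral_min {μ d : ℝ} {P : ProbabilityMeasure ℝ} (hP : P ∈ MeanMAD μ d) :
    ∫ x, min x μ ∂(P : Measure ℝ) = μ - d / 2 := by
  obtain ⟨_, hi, hm, hmad⟩ := hP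
  have : ∀ x : ℝ, min x μ = (x + μ - |x - μ|) / 2 := fun x => by
    rcases le_total x μ with h | h
    · rw [min_eq_left h, abs_of_nonpos (by linarith)]; ring
    · rw [min_eq_right h, abs_of_nonneg (by linarith)]; ring
  simp_rw [this]
  have h1 : Integrable (fun x : ℝ => x + μ) (P : Measure ℝ) := hi.add (integrable_const _)
  have h2 : Integrable (fun x : ℝ => |x - μ|) (P : Measure ℝ) := (hi.sub (integrable_const _)).abs
  rw [integral_div, integral_sub h1 h2, integral_add hi (integrable_const _), hm, hmad]
  simp; ring

/-- Chebyshev's inequality for the truncated valuations `min (v i) μ`. -/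
lemma le_prob_sum {μ d δ : ℝ} (hμ : 0 < μ) (hδ : 0 < δ) {m : ℕ} (hm : 0 < m)
    {P : Fin m → ProbabilityMeasure ℝ} (hP : ∀ i, P i ∈ MeanMAD μ d) :
    1 - μ ^ 2 / (m * δ ^ 2) ≤
      (jointMeasure P).real {v | m * (μ - d / 2 - δ) ≤ ∑ i, v i} := by
  have hm' : (0 : ℝ) < m := by exact_mod_cast hm
  have hnn : ∀ i, ∀ᵐ x ∂(P i : Measure ℝ), min x μ ∈ Icc 0 μ := fun i => by
    filter_upwards [ae_nonneg (hP i)] with x hx using ⟨le_min hx hμ.le, min_le_right _ _⟩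
  have hmem : ∀ i, MemLp (fun x : ℝ => min x μ) 2 (P i : Measure ℝ) := fun i =>
    memLp_of_bounded (hnn i) (by fun_prop) 2
  have hmem' : ∀ i, MemLp (fun v : Fin m → ℝ => min (v i) μ) 2 (jointMeasure P) := fun i =>
    (hmem i).comp_measurePreserving (measurePreserving_eval (fun i => (P i : Measure ℝ)) i)
  let S : (Fin m → ℝ) → ℝ := ∑ i, fun v => min (v i) μ
  have hS : MemLp S 2 (jointMeasure P) := memLp_finsetSum' _ fun i _ => hmem' i
  have hvar : ProbabilityTheory.variance S (jointMeasure P) ≤ m * μ ^ 2 := by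
    have h := ProbabilityTheory.variance_sum_pi (μ := fun i => (P i : Measure ℝ))
      (X := fun _ x => min x μ) hmem
    refine (le_of_eq h).trans ?_
    calc _ ≤ ∑ i : Fin m, μ ^ 2 := Finset.sum_le_sum fun i _ => by
          refine (ProbabilityTheory.variance_le_sq_of_bounded (hnn i) (by fun_prop)).trans ?_
          nlinarith [sq_nonneg μ]
      _ = m * μ ^ 2 := by simp
  have hmean : ∫ v, S v ∂(jointMeasure P) = m * (μ - d / 2) := by
    simp only [S, Finset.sum_apply]
    rw [integral_finsetSum _ fun i _ => (hmem' i).integrable (by norm_num)]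
    have : ∀ i, ∫ v, min (v i) μ ∂(jointMeasure P) = μ - d / 2 := fun i => by
      rw [← integral_min (hP i), ← (measurePreserving_eval (fun i => (P i : Measure ℝ)) i).map_eq,
        integral_map (measurable_pi_apply i).aemeasurable (by fun_prop)]
      rfl
    simp only [this, Finset.sum_const, Finset.card_univ, Fintype.card_fin, nsmul_eq_mul]
  have hcheb := ProbabilityTheory.meas_ge_le_variance_div_sq hS (c := m * δ) (by positivity)
  have hcheb' : (jointMeasure P).real {v | m * δ ≤ |S v - ∫ v, S v ∂(jointMeasure P)|} ≤
      μ ^ 2 / (m * δ ^ 2) := by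
    refine (ENNReal.toReal_le_of_le_ofReal (by
      have := ProbabilityTheory.variance_nonneg S (jointMeasure P); positivity) hcheb).trans ?_
    rw [div_le_div_iff₀ (by positivity) (by positivity)]
    calc _ ≤ m * μ ^ 2 * (m * δ ^ 2) := by gcongr
      _ = _ := by ring
  have hms : MeasurableSet {v : Fin m → ℝ | m * (μ - d / 2 - δ) ≤ ∑ i, v i} :=
    measurableSet_le measurable_const (by fun_prop)
  have hle : (jointMeasure P).real {v | m * (μ - d / 2 - δ) ≤ ∑ i, v i}ᶜ ≤
      μ ^ 2 / (m * δ ^ 2) := by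
    refine (measureReal_mono ?_).trans hcheb'
    intro v hv
    simp only [mem_compl_iff, mem_ofPred_eq, not_le] at hv ⊢
    have h1 : S v ≤ ∑ i, v i := by
      simp only [S, Finset.sum_apply]
      exact Finset.sum_le_sum fun i _ => min_le_left _ _
    rw [hmean]
    refine le_trans ?_ (neg_le_abs _)
    linarith
  rw [probReal_compl_eq_one_sub hms] at hle
  linarith

lemma bddAbove_bund {μ d : ℝ} (hμ : 0 < μ) (hd0 : 0 < d) (hd : d < 2 * μ) {m : ℕ} (hm : 0 < m) :
    BddAbove {r | ∃ p : ℝ, 0 ≤ p ∧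
      r = sInf {s | ∃ P : Fin m → ProbabilityMeasure ℝ, (∀ i, P i ∈ MeanMAD μ d) ∧
        s = BUND p (jointMeasure P) / m}} := by
  refine ⟨μ - d / 2, ?_⟩
  rintro r ⟨p, hp, rfl⟩
  exact sInf_BUND_le hμ hd0 hd hm hp

lemma bundMaximinVal_le {μ d : ℝ} (hμ : 0 < μ) (hd0 : 0 < d) (hd : d < 2 * μ) {m : ℕ}
    (hm : 0 < m) : bundMaximinVal (MeanMAD μ d) m ≤ μ - d / 2 := by
  refine csSup_le ⟨_, 0, le_rfl, rfl⟩ ?_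
  rintro r ⟨p, hp, rfl⟩
  exact sInf_BUND_le hμ hd0 hd hm hp

/-- The price `m (μ - d/2 - δ)` is accepted with high probability, uniformly over the
ambiguity set. -/
lemma le_bundMaximinVal {μ d δ : ℝ} (hμ : 0 < μ) (hd0 : 0 < d) (hd : d < 2 * μ) (hδ : 0 < δ)
    (hδ' : δ < μ - d / 2) {m : ℕ} (hm : 0 < m) :
    (μ - d / 2 - δ) * (1 - μ ^ 2 / (m * δ ^ 2)) ≤ bundMaximinVal (MeanMAD μ d) m := by
  have hm' : (0 : ℝ) < m := by exact_mod_cast hm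
  have hp : 0 ≤ m * (μ - d / 2 - δ) := mul_nonneg hm'.le (by linarith)
  refine le_csSup_of_le (bddAbove_bund hμ hd0 hd hm) ⟨_, hp, rfl⟩ (le_csInf ?_ ?_)
  · obtain ⟨P, hP⟩ := exists_mem_MeanMAD hμ hd0 hd m
    exact ⟨_, P, hP, rfl⟩
  · rintro s ⟨P, hP, rfl⟩
    have h := mul_le_mul_of_nonneg_left (le_prob_sum hμ hδ hm hP) hp
    rw [le_div_iff₀ hm']
    unfold BUND
    refine le_trans (le_of_eq ?_) h
    ring

lemma tendsto_bundMaximinVal {μ d : ℝ} (hμ : 0 < μ) (hd0 : 0 < d) (hd : d < 2 * μ) :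
    Tendsto (fun m : ℕ => bundMaximinVal (MeanMAD μ d) m) atTop (nhds (μ - d / 2)) := by
  rw [tendsto_order]
  constructor
  · intro l hl
    -- a margin `δ` with `l < μ - d/2 - δ` and `δ < μ - d/2`
    set c := μ - d / 2 with hc
    have hc0 : 0 < c := by rw [hc]; linarith
    obtain ⟨b, hb1, hb2⟩ := exists_between (max_lt hl hc0)
    have hbl := (le_max_left l 0).trans_lt hb1
    have hb0 := (le_max_right l 0).trans_lt hb1
    have hlim : Tendsto (fun m : ℕ => (c - (c - b)) * (1 - μ ^ 2 / (m * (c - b) ^ 2))) atTop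
        (nhds ((c - (c - b)) * (1 - 0))) := by
      refine (tendsto_const_nhds.sub ?_).const_mul _
      refine Tendsto.div_atTop tendsto_const_nhds ?_
      exact tendsto_natCast_atTop_atTop.atTop_mul_const (by
        have : 0 < c - b := by linarith
        positivity)
    filter_upwards [hlim.eventually (lt_mem_nhds (show l < (c - (c - b)) * (1 - 0) by linarith)),
      eventually_gt_atTop 0] with m h1 hm
    exact h1.trans_le (le_bundMaximinVal hμ hd0 hd (by linarith) (by linarith) hm)
  · intro u hu
    filter_upwards [eventually_gt_atTop 0] with m hm
    exact (bundMaximinVal_le hμ hd0 hd hm).trans_lt hu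

/-! ### Maximin and minimax over all truthful mechanisms -/

lemma bddBelow_REV {A : Set (ProbabilityMeasure ℝ)} {m : ℕ} (D : Mech m) :
    BddBelow {s | ∃ P : Fin m → ProbabilityMeasure ℝ, (∀ i, P i ∈ A) ∧
      s = REV D (jointMeasure P) / m} := by
  refine ⟨0, ?_⟩
  rintro s ⟨P, _, rfl⟩
  exact div_nonneg (REV_nonneg _ _) (by positivity)

lemma bddAbove_REV {μ d : ℝ} (hμ : 0 < μ) {m : ℕ} {P : Fin m → ProbabilityMeasure ℝ}
    (hP : ∀ i, P i ∈ MeanMAD μ d) :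
    BddAbove {s | ∃ D : Mech m, Truthful D ∧ s = REV D (jointMeasure P) / m} := by
  refine ⟨μ, ?_⟩
  rintro s ⟨D, hD, rfl⟩
  exact REV_div_le hμ hP hD

lemma sInf_REV_le {μ d : ℝ} (hμ : 0 < μ) (hd0 : 0 < d) (hd : d < 2 * μ) {m : ℕ} {D : Mech m}
    (hD : Truthful D) :
    sInf {s | ∃ P : Fin m → ProbabilityMeasure ℝ, (∀ i, P i ∈ MeanMAD μ d) ∧
      s = REV D (jointMeasure P) / m} ≤ μ := by
  obtain ⟨P, hP⟩ := exists_mem_MeanMAD hμ hd0 hd m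
  exact (csInf_le (bddBelow_REV D) ⟨P, hP, rfl⟩).trans (REV_div_le hμ hP hD)

lemma bddAbove_maximin {μ d : ℝ} (hμ : 0 < μ) (hd0 : 0 < d) (hd : d < 2 * μ) (m : ℕ) :
    BddAbove {r | ∃ D : Mech m, Truthful D ∧
      r = sInf {s | ∃ P : Fin m → ProbabilityMeasure ℝ, (∀ i, P i ∈ MeanMAD μ d) ∧
        s = REV D (jointMeasure P) / m}} := by
  refine ⟨μ, ?_⟩
  rintro r ⟨D, hD, rfl⟩
  exact sInf_REV_le hμ hd0 hd hD

lemma maximinVal_nonneg (A : Set (ProbabilityMeasure ℝ)) (m : ℕ) : 0 ≤ maximinVal A m := by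
  refine Real.sSup_nonneg ?_
  rintro r ⟨D, _, rfl⟩
  refine Real.sInf_nonneg ?_
  rintro s ⟨P, _, rfl⟩
  exact div_nonneg (REV_nonneg _ _) (by positivity)

lemma bundMaximinVal_le_maximinVal {μ d : ℝ} (hμ : 0 < μ) (hd0 : 0 < d) (hd : d < 2 * μ) (m : ℕ) :
    bundMaximinVal (MeanMAD μ d) m ≤ maximinVal (MeanMAD μ d) m := by
  refine csSup_le_csSup (bddAbove_maximin hμ hd0 hd m) ⟨_, 0, le_rfl, rfl⟩ ?_
  rintro r ⟨p, hp, rfl⟩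
  exact ⟨bundMech m p hp, bundMech_truthful m p hp, by simp_rw [REV_bundMech]⟩

lemma maximinVal_le_minimaxVal {μ d : ℝ} (hμ : 0 < μ) (hd0 : 0 < d) (hd : d < 2 * μ) (m : ℕ) :
    maximinVal (MeanMAD μ d) m ≤ minimaxVal (MeanMAD μ d) m := by
  refine csSup_le ⟨_, bundMech m 0 le_rfl, bundMech_truthful m 0 le_rfl, rfl⟩ ?_
  rintro r ⟨D, hD, rfl⟩
  obtain ⟨P₀, hP₀⟩ := exists_mem_MeanMAD hμ hd0 hd m
  refine le_csInf ⟨_, P₀, hP₀, rfl⟩ ?_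
  rintro r ⟨P, hP, rfl⟩
  exact (csInf_le (bddBelow_REV D) ⟨P, hP, rfl⟩).trans
    (le_csSup (bddAbove_REV hμ hP) ⟨D, hD, rfl⟩)

/-- Incentive compatibility against the profile in which every good has value `a`: goods allocated
at that profile bring at most `a` each, and the remaining ones bring at most their value, and
nothing at the profile itself. -/
lemma price_le_of_low {m : ℕ} {D : Mech m} (hD : Truthful D) {a : ℝ} (ha : 0 ≤ a)
    {v : Fin m → ℝ} (hv : ∀ i, 0 ≤ v i) :
    D.price v ≤ ∑ i, (D.alloc (fun _ => a) i * a + (1 - D.alloc (fun _ => a) i) *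
      (v i - ({fun _ => a} : Set (Fin m → ℝ)).indicator (fun _ => a) v)) := by
  have hlow := hD.2 (fun _ => a) fun _ => ha
  by_cases h : v = fun _ => a
  · subst h
    simp
    simpa using hlow
  · rw [indicator_of_notMem (by simpa using h)]
    have hic := hD.1 v (fun _ => a) hv fun _ => ha
    have h2 : ∑ i, D.alloc v i * v i ≤ ∑ i, v i := Finset.sum_le_sum fun i _ =>
      mul_le_of_le_one_left (hv i) (D.alloc_le_one v i)
    have h3 : ∑ i, (D.alloc (fun _ => a) i * a + (1 - D.alloc (fun _ => a) i) * (v i - 0)) =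
        ∑ i, D.alloc (fun _ => a) i * a + ∑ i, v i - ∑ i, D.alloc (fun _ => a) i * v i := by
      rw [← Finset.sum_add_distrib, ← Finset.sum_sub_distrib]
      exact Finset.sum_congr rfl fun i _ => by ring
    rw [h3]
    linarith

/-- Expectation of the previous bound: each good contributes either `a` (if allocated at the
all-`a` profile) or `μ - a * q`, where `q` is the probability of that profile. -/
lemma REV_le_of_low {μ d : ℝ} {m : ℕ} {P : Fin m → ProbabilityMeasure ℝ}
    (hP : ∀ i, P i ∈ MeanMAD μ d) {D : Mech m} (hD : Truthful D) {a : ℝ} (ha : 0 ≤ a) :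
    REV D (jointMeasure P) ≤
      max a (μ - a * (jointMeasure P).real {fun _ => a}) * m := by
  set q := (jointMeasure P).real {fun _ => a} with hq
  have hind : Integrable (({fun _ => a} : Set (Fin m → ℝ)).indicator fun _ => a)
      (jointMeasure P) := (integrable_const _).indicator (measurableSet_singleton _)
  have hterm : ∀ i, Integrable (fun v : Fin m → ℝ => D.alloc (fun _ => a) i * a +
      (1 - D.alloc (fun _ => a) i) *
      (v i - ({fun _ => a} : Set (Fin m → ℝ)).indicator (fun _ => a) v)) (jointMeasure P) :=
    fun i => (integrable_const _).add (((integrable_coord hP i).sub hind).const_mul _)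
  calc REV D (jointMeasure P)
      ≤ ∫ v, ∑ i, (D.alloc (fun _ => a) i * a + (1 - D.alloc (fun _ => a) i) *
        (v i - ({fun _ => a} : Set (Fin m → ℝ)).indicator (fun _ => a) v))
          ∂(jointMeasure P) := by
        refine integral_mono_ae (integrable_price hP hD)
          (integrable_finsetSum Finset.univ fun i _ => hterm i) ?_
        filter_upwards [ae_nonneg_joint hP] with v hv using price_le_of_low hD ha hv
    _ = ∑ i, (D.alloc (fun _ => a) i * a + (1 - D.alloc (fun _ => a) i) * (μ - a * q)) := by
        rw [integral_finsetSum _ fun i _ => hterm i]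
        refine Finset.sum_congr rfl fun i _ => ?_
        have hsub : Integrable (fun v : Fin m → ℝ => (1 - D.alloc (fun _ => a) i) *
            (v i - ({fun _ => a} : Set (Fin m → ℝ)).indicator (fun _ => a) v))
            (jointMeasure P) := ((integrable_coord hP i).sub hind).const_mul _
        rw [integral_add (integrable_const _) hsub,
          integral_const_mul, integral_const_mul, integral_sub (integrable_coord hP i) hind,
          integral_coord hP,
          integral_indicator_const _ (measurableSet_singleton _)]
        simp [hq, mul_comm]
    _ ≤ ∑ i : Fin m, max a (μ - a * q) := by
        refine Finset.sum_le_sum fun i _ => ?_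
        rcases D.alloc01 (fun _ => a) i with h | h <;> simp [h]
    _ = _ := by simp [mul_comm]

/-- As the probability `t` of the large value tends to `0`, the bound of `REV_le_of_low` tends to
`max (μ - d/2) (d/2)`, which is `d/2` because `μ ≤ d`. -/
lemma minimaxVal_le {μ d : ℝ} (hμ : 0 < μ) (hμd : μ ≤ d) (hd : d < 2 * μ) (m : ℕ) :
    minimaxVal (MeanMAD μ d) m ≤ d / 2 := by
  have hd0 : 0 < d := hμ.trans_le hμd
  have hbdd : BddBelow {r | ∃ P : Fin m → ProbabilityMeasure ℝ, (∀ i, P i ∈ MeanMAD μ d) ∧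
      r = sSup {s | ∃ D : Mech m, Truthful D ∧ s = REV D (jointMeasure P) / m}} := by
    refine ⟨0, ?_⟩
    rintro r ⟨P, _, rfl⟩
    refine Real.sSup_nonneg ?_
    rintro s ⟨D, _, rfl⟩
    exact div_nonneg (REV_nonneg _ _) (by positivity)
  have key : ∀ᶠ t in nhdsWithin (0 : ℝ) (Ioi 0), minimaxVal (MeanMAD μ d) m ≤
      max (lowPt μ d t) (μ - lowPt μ d t * (1 - t) ^ m) := by
    filter_upwards [eventually_twoPoint hμ hd0 hd m] with t ⟨h0, _, P, hP, hPl⟩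
    refine (csInf_le hbdd ⟨P, hP, rfl⟩).trans ?_
    refine csSup_le ⟨_, bundMech m 0 le_rfl, bundMech_truthful m 0 le_rfl, rfl⟩ ?_
    rintro s ⟨D, hD, rfl⟩
    rw [← hPl]
    exact div_le_of_le_mul₀ (by positivity) (h0.trans (le_max_left _ _)) (REV_le_of_low hP hD h0)
  have hpow : Tendsto (fun t : ℝ => (1 - t) ^ m) (nhdsWithin 0 (Ioi 0)) (nhds 1) := by
    have : Continuous (fun t : ℝ => (1 - t) ^ m) := by fun_prop
    have h := this.tendsto 0
    simp only [sub_zero, one_pow] at h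
    exact h.mono_left nhdsWithin_le_nhds
  have hlim := (tendsto_lowPt μ d).max
    (tendsto_const_nhds (x := μ) |>.sub ((tendsto_lowPt μ d).mul hpow))
  refine (ge_of_tendsto hlim key).trans (max_le (by linarith) (by linarith))

/-- Theorem 2: for `μ ≤ d < 2μ`, the robust bundling value converges to `μ - d/2`, the
maximin value is asymptotically at least `μ - d/2`, it is dominated by the minimax value,
and the minimax value is asymptotically at most `d/2`. -/
theorem bundling_maximin_minimax_bounds (μ d : ℝ) (hμ : 0 < μ) (hμd : μ ≤ d) (hd : d < 2 * μ) :
    Tendsto (fun m : ℕ => bundMaximinVal (MeanMAD μ d) m) atTop (nhds (μ - d / 2)) ∧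
    μ - d / 2 ≤ liminf (fun m : ℕ => maximinVal (MeanMAD μ d) m) atTop ∧
    liminf (fun m : ℕ => maximinVal (MeanMAD μ d) m) atTop ≤
      limsup (fun m : ℕ => minimaxVal (MeanMAD μ d) m) atTop ∧
    limsup (fun m : ℕ => minimaxVal (MeanMAD μ d) m) atTop ≤ d / 2 := by
  have hd0 : 0 < d := hμ.trans_le hμd
  have hle := maximinVal_le_minimaxVal hμ hd0 hd
  have hnn := maximinVal_nonneg (MeanMAD μ d)
  have hmm := minimaxVal_le hμ hμd hd
  have hT := tendsto_bundMaximinVal hμ hd0 hd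
  have b1 : IsBoundedUnder (· ≤ ·) atTop (fun m : ℕ => maximinVal (MeanMAD μ d) m) :=
    isBoundedUnder_of ⟨d / 2, fun m => (hle m).trans (hmm m)⟩
  have b2 : IsBoundedUnder (· ≥ ·) atTop (fun m : ℕ => maximinVal (MeanMAD μ d) m) :=
    isBoundedUnder_of ⟨0, hnn⟩
  have b3 : IsBoundedUnder (· ≤ ·) atTop (fun m : ℕ => minimaxVal (MeanMAD μ d) m) :=
    isBoundedUnder_of ⟨d / 2, hmm⟩
  have b4 : IsBoundedUnder (· ≥ ·) atTop (fun m : ℕ => minimaxVal (MeanMAD μ d) m) :=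
    isBoundedUnder_of ⟨0, fun m => (hnn m).trans (hle m)⟩
  refine ⟨hT, ?_, ?_, ?_⟩
  · rw [← hT.liminf_eq]
    exact liminf_le_liminf
      (Eventually.of_forall (bundMaximinVal_le_maximinVal hμ hd0 hd))
      hT.isBoundedUnder_ge b1.isCoboundedUnder_ge
  · exact (liminf_le_limsup b1 b2).trans
      (limsup_le_limsup (Eventually.of_forall hle) b2.isCoboundedUnder_le b3)
  · exact limsup_le_of_le b4.isCoboundedUnder_le (Eventually.of_forall hmm)

end
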